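/- (Paturi-type bound, easy direction used here) Let q ∈ ℝ[x] with |q(i)| ≤ c₁ for all integers i in [a,b] (a < b integers), and suppose |q(⌊ξ⌋) − q(ξ)| ≥ c₂ > 0 for some real ξ ∈ [a,b]. Then deg q ≥ C·√((ξ−a+1)(b−ξ+1)) for some constant C > 0 depending only on c₁ and c₂. -/

import Mathlib

open Polynomial

lemma diff_aeval (P : ℝ[X]) : Differentiable ℂ (fun z : ℂ => aeval z P) := by
  have h : (fun z : ℂ => aeval z P) = fun z => (P.map (algebraMap ℝ ℂ)).eval z := by
    funext z; rw [eval_map_algebraMap]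
  rw [h]
  exact Polynomial.differentiable _

lemma norm_cosh_le (w : ℂ) (hw : 0 ≤ w.re) : ‖Complex.cosh w‖ ≤ Real.exp w.re := by
  have h1 : Complex.cosh w = (Complex.exp w + Complex.exp (-w)) / 2 := rfl
  rw [h1, norm_div]
  have h2 := norm_add_le (Complex.exp w) (Complex.exp (-w))
  rw [Complex.norm_exp, Complex.norm_exp] at h2
  have h3 : Real.exp (-w).re ≤ Real.exp w.re := Real.exp_le_exp.2 (by simp; linarith)
  have h4 : ‖(2:ℂ)‖ = 2 := by simp
  rw [h4]; linarith

lemma crude (P : ℝ[X]) (N : ℕ) (hN : P.natDegree ≤ N) :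
    ∃ K : ℝ, ∀ w : ℂ, 0 ≤ w.re → ‖aeval (Complex.cosh w) P * Complex.exp (-(N * w))‖ ≤ K := by
  refine ⟨∑ i ∈ Finset.range (N+1), |P.coeff i|, fun w hw => ?_⟩
  rw [aeval_eq_sum_range' (Nat.lt_succ_of_le hN), Finset.sum_mul]
  refine (norm_sum_le _ _).trans (Finset.sum_le_sum fun i hi => ?_)
  rw [norm_mul, norm_smul, norm_pow, Complex.norm_exp, mul_assoc]
  have hi' : i ≤ N := by simpa [Nat.lt_succ_iff] using hi
  have h1 : ‖Complex.cosh w‖ ^ i ≤ Real.exp (N * w.re) := by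
    calc _ ≤ (Real.exp w.re) ^ i := by gcongr; exact norm_cosh_le w hw
      _ = Real.exp (i * w.re) := by rw [← Real.exp_nat_mul]
      _ ≤ _ := by gcongr
  have h2 : (-((N:ℂ) * w)).re = -(N * w.re) := by simp
  rw [h2]
  have h3 : ‖Complex.cosh w‖ ^ i * Real.exp (-(N * w.re)) ≤ 1 := by
    calc _ ≤ Real.exp (N * w.re) * Real.exp (-(N * w.re)) := by gcongr
      _ = 1 := by rw [← Real.exp_add]; simp
  calc _ ≤ ‖P.coeff i‖ * 1 := by gcongr
    _ = _ := by simp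

lemma growth_cosh (P : ℝ[X]) (N : ℕ) (hN : P.natDegree ≤ N) (M : ℝ)
    (hM : ∀ x : ℝ, |x| ≤ 1 → |P.eval x| ≤ M) (w : ℂ) (hw : 0 ≤ w.re) :
    ‖aeval (Complex.cosh w) P‖ ≤ M * Real.exp (N * w.re) := by
  obtain ⟨K, hK⟩ := crude P N hN
  have hdiff : Differentiable ℂ (fun w : ℂ => aeval (Complex.cosh w) P * Complex.exp (-(N * w))) := by
    have : Differentiable ℂ (fun w : ℂ => aeval (Complex.cosh w) P) :=
      (diff_aeval P).comp Complex.differentiable_cosh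
    fun_prop
  have key : ‖aeval (Complex.cosh w) P * Complex.exp (-(N * w))‖ ≤ M := by
    refine PhragmenLindelof.right_half_plane_of_bounded_on_real
      (f := fun w : ℂ => aeval (Complex.cosh w) P * Complex.exp (-(N * w)))
      hdiff.diffContOnCl ⟨1, by norm_num, 0, ?_⟩ ?_ ?_ hw
    · refine Asymptotics.IsBigO.of_bound K ?_
      refine Filter.Eventually.filter_mono inf_le_right ?_
      rw [Filter.eventually_principal]
      intro z hz
      simpa using hK z (le_of_lt hz)
    · refine ⟨K, ?_⟩
      rw [Filter.eventually_map]
      filter_upwards [Filter.eventually_ge_atTop 0] with x hx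
      exact hK x (by simpa using hx)
    · intro x
      rw [norm_mul, Complex.norm_exp]
      have h2 : (-((N:ℂ) * (x * Complex.I))).re = 0 := by simp
      rw [h2, Complex.cosh_mul_I, ← Complex.ofReal_cos]
      have h3 : aeval ((Real.cos x : ℝ) : ℂ) P = ((P.eval (Real.cos x) : ℝ) : ℂ) :=
        Polynomial.aeval_ofReal (K := ℂ) P _
      rw [h3, Complex.norm_real]
      simpa using hM _ (Real.abs_cos_le_one x)
  rw [norm_mul, Complex.norm_exp] at key
  have h2 : (-((N:ℂ) * w)).re = -(N * w.re) := by simp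
  rw [h2, Real.exp_neg] at key
  have := Real.exp_pos (N * w.re)
  rwa [← div_eq_mul_inv, div_le_iff₀ this] at key

lemma growth_cos (P : ℝ[X]) (N : ℕ) (hN : P.natDegree ≤ N) (M : ℝ)
    (hM : ∀ x : ℝ, |x| ≤ 1 → |P.eval x| ≤ M) (z : ℂ) :
    ‖aeval (Complex.cos z) P‖ ≤ M * Real.exp (N * |z.im|) := by
  rcases le_total 0 z.im with h | h
  · have := growth_cosh P N hN M hM (-(z * Complex.I)) (by simpa using h)
    rw [Complex.cosh_neg, Complex.cosh_mul_I] at this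
    simpa [abs_of_nonneg h] using this
  · have := growth_cosh P N hN M hM (z * Complex.I) (by simpa using h)
    rw [Complex.cosh_mul_I] at this
    simpa [abs_of_nonpos h] using this

lemma lip_cos (P : ℝ[X]) (N : ℕ) (hN0 : 0 < N) (hN : P.natDegree ≤ N) (M : ℝ)
    (hM : ∀ x : ℝ, |x| ≤ 1 → |P.eval x| ≤ M) (x y : ℝ) :
    |P.eval (Real.cos x) - P.eval (Real.cos y)| ≤ 3 * N * M * |x - y| := by
  have hNr : (0:ℝ) < N := by exact_mod_cast hN0
  have hM0 : 0 ≤ M := (abs_nonneg _).trans (hM 0 (by simp))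
  have hdiff : Differentiable ℂ (fun w : ℂ => aeval (Complex.cos w) P) :=
    (diff_aeval P).comp Complex.differentiable_cos
  have hb : ∀ z ∈ {z : ℂ | z.im = 0}, ‖deriv (fun w : ℂ => aeval (Complex.cos w) P) z‖ ≤ 3 * N * M := by
    intro z hz
    have h := Complex.norm_deriv_le_of_forall_mem_sphere_norm_le (c := z) (R := 1 / N)
      (C := M * 3) (f := fun w : ℂ => aeval (Complex.cos w) P) (by positivity) hdiff.diffContOnCl ?_
    · refine h.trans (le_of_eq ?_)
      field_simp
    · intro u hu
      refine (growth_cos P N hN M hM u).trans ?_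
      have h1 : |u.im| ≤ 1 / N := by
        have h2 := Complex.abs_im_le_norm (u - z)
        have h3 : ‖u - z‖ = 1 / N := by simpa [dist_eq_norm] using hu
        have h4 : z.im = 0 := hz
        rw [h3] at h2; simpa [h4] using h2
      have h2 : (N:ℝ) * |u.im| ≤ 1 := by
        calc (N:ℝ) * |u.im| ≤ N * (1 / N) := by gcongr
          _ = 1 := by field_simp
      have h3 : Real.exp (N * |u.im|) ≤ 3 := by
        calc _ ≤ Real.exp 1 := Real.exp_le_exp.2 h2
          _ ≤ 3 := by linarith [Real.exp_one_lt_d9]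
      gcongr
  have hconv : Convex ℝ {z : ℂ | z.im = 0} := by
    intro a ha b hb s t _ _ _
    have ha' : a.im = 0 := ha
    have hb' : b.im = 0 := hb
    simp [ha', hb']
  have := hconv.norm_image_sub_le_of_norm_deriv_le (fun z _ => hdiff z) hb
    (x := (y:ℂ)) (y := (x:ℂ)) (by simp) (by simp)
  have h3 : ∀ t : ℝ, aeval (Complex.cos (t:ℂ)) P = ((P.eval (Real.cos t) : ℝ) : ℂ) := by
    intro t
    rw [← Complex.ofReal_cos]
    exact Polynomial.aeval_ofReal (K := ℂ) P _
  simp only [h3] at this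
  rw [← Complex.ofReal_sub, ← Complex.ofReal_sub, Complex.norm_real, Complex.norm_real] at this
  simpa using this

lemma norm_sin_ge (w : ℂ) (hw : ‖w‖ = 1) : 1 / 2 ≤ ‖Complex.sin w‖ := by
  have hsq : w.re ^ 2 + w.im ^ 2 = 1 := by
    have := Complex.sq_norm w
    rw [hw, Complex.normSq_apply] at this
    nlinarith
  have h1 : Complex.normSq (Complex.sin w) = Real.sin w.re ^ 2 + Real.sinh w.im ^ 2 := by
    have hre : (Complex.sin w).re = Real.sin w.re * Real.cosh w.im := by
      rw [Complex.sin_eq, ← Complex.ofReal_sin, ← Complex.ofReal_cos, ← Complex.ofReal_sinh,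
        ← Complex.ofReal_cosh]
      simp
      left; rfl
    have him : (Complex.sin w).im = Real.cos w.re * Real.sinh w.im := by
      rw [Complex.sin_eq, ← Complex.ofReal_sin, ← Complex.ofReal_cos, ← Complex.ofReal_sinh,
        ← Complex.ofReal_cosh]
      simp
      rfl
    rw [Complex.normSq_apply, hre, him]
    have e1 := Real.sin_sq_add_cos_sq w.re
    have e2 := Real.cosh_sq w.im
    have e3 : Real.cos w.re ^ 2 = 1 - Real.sin w.re ^ 2 := by linarith
    linear_combination Real.sin w.re ^ 2 * e2 + Real.sinh w.im ^ 2 * e3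
  have hs : ∀ t : ℝ, t ^ 2 ≤ Real.sinh t ^ 2 := by
    intro t
    rw [sq_le_sq, Real.abs_sinh]
    exact Real.self_le_sinh_iff.2 (abs_nonneg t)
  have hsin : (w.re / 2) ^ 2 ≤ Real.sin w.re ^ 2 := by
    have hle : |w.re| ≤ 1 := by rw [← hw]; exact Complex.abs_re_le_norm w
    have h2 := Real.mul_le_sin (abs_nonneg w.re) (by linarith [Real.pi_gt_three])
    have h3 : (1:ℝ)/2 ≤ 2 / Real.pi := by
      rw [div_le_div_iff₀ (by norm_num) Real.pi_pos]; linarith [Real.pi_le_four]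
    have h4 : |w.re| / 2 ≤ Real.sin |w.re| := by
      nlinarith [abs_nonneg w.re]
    have h5 : Real.sin |w.re| ^ 2 = Real.sin w.re ^ 2 := by
      rcases abs_choice w.re with h | h <;> rw [h] <;> simp
    rw [← h5, ← sq_abs (w.re / 2)]
    have : |w.re / 2| = |w.re| / 2 := by rw [abs_div]; simp
    rw [this]
    gcongr
  have h6 : (1/2:ℝ) ^ 2 ≤ ‖Complex.sin w‖ ^ 2 := by
    rw [Complex.sq_norm, h1]
    nlinarith [hs w.im, sq_nonneg w.im]
  exact le_of_sq_le_sq h6 (norm_nonneg _)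

/-- The multiplier polynomial: at `cos θ` it equals `sin (pθ) ^ (2r)`. -/
noncomputable def mult (p r : ℕ) : ℝ[X] := (1 - (Chebyshev.T ℝ p) ^ 2) ^ r

lemma mult_real (p r : ℕ) (θ : ℝ) : (mult p r).eval (Real.cos θ) = (Real.sin (p * θ)) ^ (2 * r) := by
  have := Chebyshev.T_real_cos θ p
  simp only [mult, eval_pow, eval_sub, eval_one, this]
  rw [pow_mul, Real.sin_sq]; simp

lemma mult_complex (p r : ℕ) (z : ℂ) :
    aeval (Complex.cos z) (mult p r) = (Complex.sin (p * z)) ^ (2 * r) := by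
  have h : aeval (Complex.cos z) (Chebyshev.T ℝ p) = Complex.cos (p * z) := by
    have := Chebyshev.T_complex_cos z p
    rw [← Chebyshev.map_T (algebraMap ℝ ℂ), eval_map_algebraMap] at this
    simpa using this
  simp only [mult, map_pow, map_sub, map_one, h]
  rw [pow_mul, Complex.sin_sq]

lemma mult_deg (p r : ℕ) : (mult p r).natDegree ≤ 2 * p * r := by
  unfold mult
  refine natDegree_pow_le.trans ?_
  have : (1 - (Chebyshev.T ℝ p) ^ 2).natDegree ≤ 2 * p := by
    refine (natDegree_sub_le _ _).trans ?_
    simp [natDegree_pow]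
  calc _ ≤ r * (2 * p) := by gcongr
    _ = _ := by ring

/-- Maxima of `Q * mult` stay away from a common zero `c`. -/
lemma away (Q : ℝ[X]) (p r N : ℕ) (hp : 0 < p) (hr : 0 < r) (hNr : N ≤ 4 * p * r)
    (hN : (Q * mult p r).natDegree ≤ N) (M : ℝ) (hM0 : 0 < M)
    (hM : ∀ x : ℝ, |x| ≤ 1 → |(Q * mult p r).eval x| ≤ M) (c : ℝ)
    (hc : ∀ w : ℂ, ‖Complex.sin (p * (c + w))‖ = ‖Complex.sin (p * w)‖)
    (θ : ℝ) (hθ : M ≤ |(Q * mult p r).eval (Real.cos θ)|) : 1 / (16 * p) ≤ |θ - c| := by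
  by_contra! hlt
  have hpr : (0:ℝ) < p := by exact_mod_cast hp
  have hdiff : Differentiable ℂ (fun w : ℂ => aeval (Complex.cos w) Q) :=
    (diff_aeval Q).comp Complex.differentiable_cos
  have hexp : Real.exp 2 ≤ 15 / 2 := by
    have : Real.exp 2 = Real.exp 1 ^ 2 := by rw [← Real.exp_nat_mul]; norm_num
    rw [this]
    have h1 := Real.exp_one_lt_d9
    have h2 := Real.exp_pos 1
    nlinarith
  have hQ : ∀ z ∈ frontier (Metric.ball (c:ℂ) (1 / p)), ‖aeval (Complex.cos z) Q‖ ≤ M * 15 ^ (2 * r) := by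
    intro z hz
    rw [frontier_ball _ (by positivity)] at hz
    have hz1 : ‖z - c‖ = 1 / p := by simpa [dist_eq_norm] using hz
    have h1 := growth_cos _ N hN M hM z
    rw [map_mul, norm_mul, mult_complex, norm_pow] at h1
    have h2 : |z.im| ≤ 1 / p := by
      have := Complex.abs_im_le_norm (z - c)
      rw [hz1] at this; simpa using this
    have h3 : Real.exp (N * |z.im|) ≤ (15 / 2) ^ (2 * r) := by
      calc Real.exp (N * |z.im|) ≤ Real.exp ((2 * r : ℕ) * 2) := by
            apply Real.exp_le_exp.2
            have hN' : (N:ℝ) ≤ 4 * p * r := by exact_mod_cast hNr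
            calc (N:ℝ) * |z.im| ≤ (4 * p * r) * (1 / p) := by gcongr
              _ = _ := by push_cast; field_simp; ring
        _ = Real.exp 2 ^ (2 * r) := by rw [Real.exp_nat_mul]
        _ ≤ _ := by gcongr
    have h4 : 1 / 2 ≤ ‖Complex.sin (p * z)‖ := by
      have := hc (z - c)
      rw [add_sub_cancel] at this
      rw [this]
      apply norm_sin_ge
      rw [norm_mul, hz1]; simp; field_simp
    have h5 : ‖aeval (Complex.cos z) Q‖ * (1/2) ^ (2 * r) ≤ M * (15 / 2) ^ (2 * r) := by
      calc _ ≤ ‖aeval (Complex.cos z) Q‖ * ‖Complex.sin (p * z)‖ ^ (2 * r) := by gcongr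
        _ ≤ _ := h1
        _ ≤ _ := by gcongr
    have h6 : ((15:ℝ)/2) ^ (2*r) = 15 ^ (2*r) * (1/2) ^ (2*r) := by rw [← mul_pow]; norm_num
    rw [h6, ← mul_assoc] at h5
    exact le_of_mul_le_mul_right h5 (by positivity)
  have hmem : (θ:ℂ) ∈ closure (Metric.ball (c:ℂ) (1 / p)) := by
    apply subset_closure
    rw [Metric.mem_ball, dist_eq_norm, ← Complex.ofReal_sub, Complex.norm_real]
    refine lt_trans hlt ?_
    rw [div_lt_div_iff₀ (by positivity) hpr]; nlinarith
  have hQθ := Complex.norm_le_of_forall_mem_frontier_norm_le Metric.isBounded_ball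
    hdiff.diffContOnCl hQ hmem
  have h3 : aeval (Complex.cos (θ:ℂ)) Q = ((Q.eval (Real.cos θ) : ℝ) : ℂ) := by
    rw [← Complex.ofReal_cos]
    exact Polynomial.aeval_ofReal (K := ℂ) Q _
  simp only [h3] at hQθ
  rw [Complex.norm_real, Real.norm_eq_abs] at hQθ
  rw [eval_mul, abs_mul, mult_real, abs_pow] at hθ
  have hs : |Real.sin (p * θ)| ≤ 1 / 16 := by
    have := hc ((θ - c : ℝ) : ℂ)
    rw [Complex.ofReal_sub, add_sub_cancel] at this
    rw [← Complex.ofReal_sub] at this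
    have e : ∀ t : ℝ, ‖Complex.sin ((p:ℂ) * (t:ℂ))‖ = |Real.sin (p * t)| := by
      intro t
      rw [← Complex.ofReal_natCast, ← Complex.ofReal_mul, ← Complex.ofReal_sin, Complex.norm_real,
        Real.norm_eq_abs]
    rw [e, e] at this
    rw [this]
    refine Real.abs_sin_le_abs.trans ?_
    rw [abs_mul, Nat.abs_cast]
    calc (p:ℝ) * |θ - c| ≤ p * (1 / (16 * p)) := by gcongr
      _ = _ := by field_simp
  have : M ≤ M * (15 / 16) ^ (2 * r) := by
    calc M ≤ _ := hθ
      _ ≤ (M * 15 ^ (2 * r)) * (1 / 16) ^ (2 * r) := by gcongr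
      _ = _ := by rw [mul_assoc, ← mul_pow]; norm_num
  have h7 : ((15:ℝ) / 16) ^ (2 * r) < 1 := pow_lt_one₀ (by norm_num) (by norm_num) (by omega)
  nlinarith

lemma sin_lower (p : ℕ) (hp : 0 < p) (θ : ℝ) (h1 : 1 / (16 * p) ≤ θ)
    (h2 : θ ≤ Real.pi - 1 / (16 * p)) : 1 / (32 * (p:ℝ)) ≤ Real.sin θ := by
  have hpr : (0:ℝ) < p := by exact_mod_cast hp
  have h3 : (1:ℝ)/2 ≤ 2 / Real.pi := by
    rw [div_le_div_iff₀ (by norm_num) Real.pi_pos]; linarith [Real.pi_le_four]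
  have h4 : 1 / (32 * (p:ℝ)) = 1 / (16 * p) / 2 := by field_simp; norm_num
  have h5 : 0 < 1 / (16 * (p:ℝ)) := by positivity
  rw [h4]
  rcases le_total θ (Real.pi / 2) with h | h
  · have := Real.mul_le_sin (x := θ) (by linarith) h
    nlinarith
  · have := Real.mul_le_sin (x := Real.pi - θ) (by linarith) (by linarith)
    rw [Real.sin_pi_sub] at this
    nlinarith

lemma cos_diff (x y : ℝ) : |Real.cos x - Real.cos y| =
    2 * |Real.sin ((x + y) / 2)| * Real.sin (|x - y| / 2) ∨ 2 * Real.pi < |x - y| := by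
  by_cases h : 2 * Real.pi < |x - y|
  · exact Or.inr h
  left
  push Not at h
  have h0 : 0 ≤ Real.sin (|x - y| / 2) :=
    Real.sin_nonneg_of_nonneg_of_le_pi (by positivity) (by linarith)
  rw [Real.cos_sub_cos, abs_mul, abs_mul]
  have : |Real.sin ((x - y) / 2)| = Real.sin (|x - y| / 2) := by
    rcases le_total 0 (x - y) with h1 | h1
    · rw [abs_of_nonneg h1] at h0 ⊢; exact abs_of_nonneg h0
    · rw [abs_of_nonpos h1] at h0 ⊢
      rw [neg_div, Real.sin_neg] at h0 ⊢
      exact abs_of_nonpos (by linarith)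
  rw [this]; norm_num

lemma half_sin_lower (t : ℝ) (h0 : 0 ≤ t) (h1 : t ≤ Real.pi) : t / 4 ≤ Real.sin (t / 2) := by
  have h3 : (1:ℝ)/2 ≤ 2 / Real.pi := by
    rw [div_le_div_iff₀ (by norm_num) Real.pi_pos]; linarith [Real.pi_le_four]
  have := Real.mul_le_sin (x := t / 2) (by linarith) (by linarith)
  nlinarith

lemma geo (L s θ θ' : ℝ) (hL : 0 < L) (hs : 0 < s) (h0 : 0 ≤ θ) (h1 : θ ≤ Real.pi)
    (h0' : 0 ≤ θ') (h1' : θ' ≤ Real.pi) (hsin : s ≤ Real.sin θ)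
    (h : L * |Real.cos θ - Real.cos θ'| ≤ 2) : |θ - θ'| ≤ 8 / (L * s) := by
  have hpi := Real.pi_pos
  have hab : |θ - θ'| ≤ Real.pi := by rw [abs_le]; constructor <;> linarith
  rcases cos_diff θ θ' with hc | hc
  swap
  · linarith
  have ht : s / 2 ≤ Real.sin ((θ + θ') / 2) := by
    have hd : Real.sin θ = 2 * Real.sin (θ / 2) * Real.cos (θ / 2) := by
      rw [← Real.sin_two_mul]; congr 1; ring
    have ha : 0 ≤ Real.sin (θ / 2) := Real.sin_nonneg_of_nonneg_of_le_pi (by linarith) (by linarith)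
    have hb : 0 ≤ Real.cos (θ / 2) := Real.cos_nonneg_of_neg_pi_div_two_le_of_le (by linarith) (by linarith)
    have ha1 := Real.sin_le_one (θ / 2)
    have hb1 := Real.cos_le_one (θ / 2)
    rcases le_total ((θ + θ') / 2) (Real.pi / 2) with h2 | h2
    · have : Real.sin (θ / 2) ≤ Real.sin ((θ + θ') / 2) :=
        Real.sin_le_sin_of_le_of_le_pi_div_two (by linarith) h2 (by linarith)
      nlinarith
    · have : Real.sin (Real.pi / 2 - θ / 2) ≤ Real.sin (Real.pi - (θ + θ') / 2) :=
        Real.sin_le_sin_of_le_of_le_pi_div_two (by linarith) (by linarith) (by linarith)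
      rw [Real.sin_pi_div_two_sub, Real.sin_pi_sub] at this
      nlinarith
  have h3 := half_sin_lower |θ - θ'| (abs_nonneg _) hab
  rw [hc, abs_of_nonneg (by linarith)] at h
  rw [le_div_iff₀ (by positivity)]
  have h5 : (s / 2) * (|θ - θ'| / 4) ≤ Real.sin ((θ + θ') / 2) * Real.sin (|θ - θ'| / 2) := by
    gcongr
    linarith
  nlinarith [mul_le_mul_of_nonneg_left h5 hL.le]

lemma geo0 (L θ θ' : ℝ) (hL : 0 < L) (h0 : 0 ≤ θ) (h1 : θ ≤ Real.pi)
    (h0' : 0 ≤ θ') (h1' : θ' ≤ Real.pi)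
    (h : L * |Real.cos θ - Real.cos θ'| ≤ 2) : |θ - θ'| ≤ 4 / Real.sqrt L := by
  have hpi := Real.pi_pos
  have hab : |θ - θ'| ≤ Real.pi := by rw [abs_le]; constructor <;> linarith
  rcases cos_diff θ θ' with hc | hc
  swap
  · linarith
  have h3 := half_sin_lower |θ - θ'| (abs_nonneg _) hab
  have ht : Real.sin (|θ - θ'| / 2) ≤ Real.sin ((θ + θ') / 2) := by
    have hle : |θ - θ'| ≤ θ + θ' := by rw [abs_le]; constructor <;> linarith
    rcases le_total ((θ + θ') / 2) (Real.pi / 2) with h2 | h2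
    · exact Real.sin_le_sin_of_le_of_le_pi_div_two (by linarith [abs_nonneg (θ - θ')]) h2 (by linarith)
    · rw [← Real.sin_pi_sub ((θ + θ') / 2)]
      refine Real.sin_le_sin_of_le_of_le_pi_div_two (by linarith [abs_nonneg (θ - θ')]) (by linarith) ?_
      have : |θ - θ'| ≤ 2 * Real.pi - (θ + θ') := by rw [abs_le]; constructor <;> linarith
      linarith
  have hnn : 0 ≤ |θ - θ'| / 4 := by positivity
  rw [hc, abs_of_nonneg (by linarith)] at h
  have hsq : 0 < Real.sqrt L := Real.sqrt_pos.2 hL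
  rw [le_div_iff₀ hsq]
  have h5 : (|θ - θ'| / 4) * (|θ - θ'| / 4) ≤ Real.sin ((θ + θ') / 2) * Real.sin (|θ - θ'| / 2) := by
    exact mul_le_mul (by linarith) h3 hnn (by linarith)
  have h6 := mul_le_mul_of_nonneg_left h5 hL.le
  have h7 : (|θ - θ'| * Real.sqrt L) ^ 2 ≤ 4 ^ 2 := by
    rw [mul_pow, Real.sq_sqrt hL.le]; nlinarith
  exact le_of_sq_le_sq h7 (by norm_num)

/-- `q` in the variable `x ↦ a + L (1 - x) / 2`. -/
noncomputable def shifted (q : ℝ[X]) (a L : ℝ) : ℝ[X] := q.comp (C (a + L / 2) - C (L / 2) * X)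

lemma shifted_eval (q : ℝ[X]) (a L x : ℝ) : (shifted q a L).eval x = q.eval (a + L * (1 - x) / 2) := by
  simp only [shifted, eval_comp, eval_sub, eval_C, eval_mul, eval_X]
  congr 1; ring

lemma shifted_deg (q : ℝ[X]) (a L : ℝ) : (shifted q a L).natDegree ≤ q.natDegree := by
  unfold shifted
  rw [natDegree_comp]
  have : (C (a + L / 2) - C (L / 2) * X : ℝ[X]).natDegree ≤ 1 := by
    refine (natDegree_sub_le _ _).trans ?_
    simp only [natDegree_C, zero_le, sup_of_le_right]
    exact (natDegree_C_mul_le _ _).trans natDegree_X_le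
  nlinarith

lemma core (q : ℝ[X]) (a L ξ c₁ c₂ τ θ₀ : ℝ) (p r N : ℕ) (m : ℤ) (hL : 0 < L) (hc₁ : 0 < c₁)
    (hα : ∃ α : ℤ, (α : ℝ) = a)
    (hq : ∀ i : ℤ, a ≤ i → (i:ℝ) ≤ a + L → |q.eval (i:ℝ)| ≤ c₁)
    (h0 : 0 ≤ θ₀) (h1 : θ₀ ≤ Real.pi) (hs : Real.sin (p * θ₀) ^ (2 * r) = 1)
    (hm : a ≤ m) (hm' : (m:ℝ) ≤ a + L) (hmξ : |(m:ℝ) - ξ| ≤ 1)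
    (hξ : ξ = a + L * (1 - Real.cos θ₀) / 2) (hN0 : 0 < N) (hN : q.natDegree + 2 * p * r ≤ N)
    (hc : c₂ ≤ |q.eval (m:ℝ) - q.eval ξ|)
    (hτ0 : ∀ θ', 0 ≤ θ' → θ' ≤ Real.pi → L * |Real.cos θ₀ - Real.cos θ'| ≤ 2 → |θ₀ - θ'| ≤ τ)
    (hτ : ∀ θ M, 0 ≤ θ → θ ≤ Real.pi → 0 < M →
      (∀ x : ℝ, |x| ≤ 1 → |(shifted q a L * mult p r).eval x| ≤ M) →
      M ≤ |(shifted q a L * mult p r).eval (Real.cos θ)| →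
      ∀ θ', 0 ≤ θ' → θ' ≤ Real.pi → L * |Real.cos θ - Real.cos θ'| ≤ 2 → |θ - θ'| ≤ τ) :
    min (1/2) (c₂ / (3 * c₁)) ≤ 3 * N * τ := by
  set P := shifted q a L * mult p r with hP
  have hPdeg : P.natDegree ≤ N := by
    refine natDegree_mul_le.trans ?_
    have := shifted_deg q a L
    have := mult_deg p r
    omega
  have hmdeg : (mult p r).natDegree ≤ N := by
    have := mult_deg p r
    omega
  have hmb : ∀ x : ℝ, |x| ≤ 1 → |(mult p r).eval x| ≤ 1 := by
    intro x hx
    rw [abs_le] at hx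
    rw [← Real.cos_arccos hx.1 hx.2, mult_real, abs_pow]
    exact pow_le_one₀ (abs_nonneg _) (Real.abs_sin_le_one _)
  obtain ⟨x0, hx0, hmax⟩ := (isCompact_Icc (a := (-1:ℝ)) (b := 1)).exists_isMaxOn
    ⟨0, by norm_num⟩ (f := fun x => |P.eval x|) (by fun_prop)
  have hM : ∀ x : ℝ, |x| ≤ 1 → |P.eval x| ≤ |P.eval x0| := fun x hx => hmax (abs_le.1 hx)
  set M := |P.eval x0| with hMdef
  have hM0 : 0 ≤ M := abs_nonneg _
  -- angles of points
  have ang : ∀ y : ℝ, a ≤ y → y ≤ a + L → ∃ φ, 0 ≤ φ ∧ φ ≤ Real.pi ∧ y = a + L * (1 - Real.cos φ) / 2 := by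
    intro y hy hy'
    refine ⟨Real.arccos (1 - 2 * (y - a) / L), Real.arccos_nonneg _, Real.arccos_le_pi _, ?_⟩
    rw [Real.cos_arccos]
    · field_simp; ring
    · have : (y - a) / L ≤ 1 := by rw [div_le_one hL]; linarith
      rw [mul_div_assoc]; linarith
    · have : 0 ≤ (y - a) / L := div_nonneg (by linarith) hL.le
      rw [mul_div_assoc]; linarith
  have dist : ∀ φ φ' : ℝ, |(a + L * (1 - Real.cos φ') / 2) - (a + L * (1 - Real.cos φ) / 2)| ≤ 1 →
      L * |Real.cos φ - Real.cos φ'| ≤ 2 := by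
    intro φ φ' h
    have e : (a + L * (1 - Real.cos φ') / 2) - (a + L * (1 - Real.cos φ) / 2)
        = L * (Real.cos φ - Real.cos φ') / 2 := by ring
    rw [e, abs_div, abs_mul, abs_of_pos hL] at h
    norm_num at h; linarith
  have Pev : ∀ φ, P.eval (Real.cos φ) =
      q.eval (a + L * (1 - Real.cos φ) / 2) * Real.sin (p * φ) ^ (2 * r) := by
    intro φ; rw [hP, eval_mul, shifted_eval, mult_real]
  have sb : ∀ φ : ℝ, |Real.sin (p * φ) ^ (2 * r)| ≤ 1 := by
    intro φ; rw [abs_pow]; exact pow_le_one₀ (abs_nonneg _) (Real.abs_sin_le_one _)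
  obtain ⟨θ₁, g0, g1, g2⟩ := ang m hm hm'
  have hd01 : |θ₀ - θ₁| ≤ τ := hτ0 θ₁ g0 g1 (dist _ _ (by rw [← g2, ← hξ]; exact hmξ))
  have hτ0' : 0 ≤ τ := (abs_nonneg _).trans hd01
  set η := 3 * N * τ with hη
  have hη0 : 0 ≤ η := by positivity
  -- bound on M
  have hMb : M ≤ c₁ + η * M := by
    rcases hM0.eq_or_lt with h | h
    · rw [← h]; linarith
    obtain ⟨α, hα⟩ := hα
    set θ := Real.arccos x0
    have hcθ : Real.cos θ = x0 := Real.cos_arccos hx0.1 hx0.2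
    set y := a + L * (1 - Real.cos θ) / 2 with hy
    have hy1 : a ≤ y := by
      have : 0 ≤ L * (1 - Real.cos θ) := mul_nonneg hL.le (by linarith [Real.cos_le_one θ])
      linarith
    have hy2 : y ≤ a + L := by
      have : L * (1 - Real.cos θ) ≤ L * 2 := by
        gcongr; linarith [Real.neg_one_le_cos θ]
      linarith
    have hi1 : a ≤ (⌊y⌋ : ℤ) := by
      rw [← hα]
      exact_mod_cast Int.le_floor.2 (by rw [hα]; exact hy1)
    have hi2 : ((⌊y⌋ : ℤ) : ℝ) ≤ a + L := (Int.floor_le y).trans hy2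
    obtain ⟨φ, f0, f1, f2⟩ := ang _ hi1 hi2
    have hdd : |θ - φ| ≤ τ := by
      refine hτ θ M (Real.arccos_nonneg _) (Real.arccos_le_pi _) h hM (by rw [hcθ]) φ f0 f1 (dist _ _ ?_)
      rw [← f2, ← hy, abs_le]
      constructor <;> linarith [Int.floor_le y, Int.lt_floor_add_one y]
    have hl := lip_cos P N hN0 hPdeg M hM θ φ
    have h5 : |P.eval (Real.cos φ)| ≤ c₁ := by
      rw [Pev, ← f2, abs_mul]
      calc _ ≤ c₁ * 1 := by gcongr; exacts [hq _ hi1 hi2, sb φ]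
        _ = c₁ := mul_one _
    have h6 : 3 * N * M * |θ - φ| ≤ η * M := by
      calc 3 * N * M * |θ - φ| ≤ 3 * N * M * τ := by gcongr
        _ = _ := by rw [hη]; ring
    have h7 := abs_sub_abs_le_abs_sub (P.eval (Real.cos θ)) (P.eval (Real.cos φ))
    rw [hcθ] at h7 hl
    linarith
  have hl := lip_cos P N hN0 hPdeg M hM θ₀ θ₁
  have hl2 := lip_cos (mult p r) N hN0 hmdeg 1 hmb θ₀ θ₁
  rw [mult_real, mult_real, hs] at hl2
  rw [Pev, Pev, hs, ← hξ, ← g2, mul_one] at hl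
  set h1' := Real.sin (p * θ₁) ^ (2 * r)
  have k1 : 3 * N * M * |θ₀ - θ₁| ≤ η * M := by
    calc 3 * N * M * |θ₀ - θ₁| ≤ 3 * N * M * τ := by gcongr
      _ = _ := by rw [hη]; ring
  have k2 : 3 * N * 1 * |θ₀ - θ₁| ≤ η := by
    calc 3 * N * 1 * |θ₀ - θ₁| ≤ 3 * N * 1 * τ := by gcongr
      _ = _ := by rw [hη]; ring
  have k3 : |q.eval (m:ℝ) - q.eval ξ| ≤ c₁ * η + η * M := by
    have e : q.eval (m:ℝ) - q.eval ξ = q.eval (m:ℝ) * (1 - h1') - (q.eval ξ - q.eval (m:ℝ) * h1') := by ring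
    rw [e]
    refine (abs_sub _ _).trans (add_le_add ?_ (hl.trans k1))
    rw [abs_mul]
    exact mul_le_mul (hq m hm hm') (hl2.trans k2) (abs_nonneg _) hc₁.le
  by_contra! hlt
  rw [lt_min_iff] at hlt
  have hM2 : M ≤ 2 * c₁ := by nlinarith
  have := hlt.2
  rw [lt_div_iff₀ (by positivity)] at this
  nlinarith

lemma caseA (q : ℝ[X]) (a b : ℤ) (ξ c₁ c₂ : ℝ) (m : ℤ) (hab : a < b) (hc₁ : 0 < c₁)
    (h1 : (a:ℝ) ≤ ξ) (h2 : ξ ≤ b) (hq : ∀ i : ℤ, a ≤ i → i ≤ b → |q.eval (i:ℝ)| ≤ c₁)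
    (hm : a ≤ m) (hm' : m ≤ b) (hmξ : |(m:ℝ) - ξ| ≤ 1) (hd : 0 < q.natDegree)
    (hc : c₂ ≤ |q.eval (m:ℝ) - q.eval ξ|) :
    min (1/2) (c₂ / (3 * c₁)) * Real.sqrt ((b:ℝ) - a) ≤ 12 * q.natDegree := by
  have hL : (0:ℝ) < b - a := by
    have : (a:ℝ) < b := by exact_mod_cast hab
    linarith
  have hsq : 0 < Real.sqrt ((b:ℝ) - a) := Real.sqrt_pos.2 hL
  have hb1 : -1 ≤ 1 - 2 * (ξ - a) / ((b:ℝ) - a) := by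
    have : (ξ - a) / ((b:ℝ) - a) ≤ 1 := by rw [div_le_one hL]; linarith
    rw [mul_div_assoc]; linarith
  have hb2 : 1 - 2 * (ξ - a) / ((b:ℝ) - a) ≤ 1 := by
    have : 0 ≤ (ξ - a) / ((b:ℝ) - a) := div_nonneg (by linarith) hL.le
    rw [mul_div_assoc]; linarith
  have key := core q a (b - a) ξ c₁ c₂ (4 / Real.sqrt ((b:ℝ) - a))
    (Real.arccos (1 - 2 * (ξ - a) / ((b:ℝ) - a))) 1 0 q.natDegree m hL hc₁ ⟨a, rfl⟩
    (fun i hi hi' => hq i (by exact_mod_cast hi) (by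
      have : (i:ℝ) ≤ b := by linarith
      exact_mod_cast this))
    (Real.arccos_nonneg _) (Real.arccos_le_pi _) (by simp) (by exact_mod_cast hm)
    (by have : (m:ℝ) ≤ b := by exact_mod_cast hm'
        linarith) hmξ
    (by rw [Real.cos_arccos hb1 hb2]; field_simp; ring) hd (by simp) hc
    (fun θ' h h' hh => geo0 _ _ _ hL (Real.arccos_nonneg _) (Real.arccos_le_pi _) h h' hh)
    (fun θ M g g' _ _ _ θ' h h' hh => geo0 _ _ _ hL g g' h h' hh)
  have e : 3 * (q.natDegree:ℝ) * (4 / Real.sqrt ((b:ℝ) - a)) = 12 * q.natDegree / Real.sqrt ((b:ℝ) - a) := by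
    ring
  rwa [e, le_div_iff₀ hsq] at key

lemma caseB (q : ℝ[X]) (a : ℤ) (L ξ c₁ c₂ : ℝ) (p r : ℕ) (m : ℤ) (hL : 0 < L) (hc₁ : 0 < c₁)
    (hp : 0 < p) (hr : 0 < r) (hd : q.natDegree ≤ 2 * p * r)
    (hq : ∀ i : ℤ, (a:ℝ) ≤ i → (i:ℝ) ≤ a + L → |q.eval (i:ℝ)| ≤ c₁)
    (hm : (a:ℝ) ≤ m) (hm' : (m:ℝ) ≤ a + L) (hmξ : |(m:ℝ) - ξ| ≤ 1)
    (hξ : ξ = a + L * (1 - Real.cos (Real.pi / (2 * p))) / 2)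
    (hc : c₂ ≤ |q.eval (m:ℝ) - q.eval ξ|) :
    min (1/2) (c₂ / (3 * c₁)) * L ≤ 3072 * p * (p * r) := by
  have hpr : (1:ℝ) ≤ p := by exact_mod_cast hp
  have hp0 : (0:ℝ) < p := by linarith
  have hpi := Real.pi_gt_three
  have q1 : Real.pi / (2 * p) ≤ Real.pi / 2 := by
    apply div_le_div_of_nonneg_left <;> linarith
  have q2 : 1 / (16 * (p:ℝ)) ≤ Real.pi / (2 * p) := by
    rw [div_le_div_iff₀ (by positivity) (by positivity)]; nlinarith
  have q3 : 1 / (16 * (p:ℝ)) ≤ 1 := by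
    rw [div_le_one (by positivity)]; linarith
  have q4 : 0 < 1 / (16 * (p:ℝ)) := by positivity
  have etau : 8 / (L * (1 / (32 * (p:ℝ)))) = 256 * p / L := by field_simp; norm_num
  have key := core q a L ξ c₁ c₂ (256 * p / L)
    (Real.pi / (2 * p)) p r (4 * p * r) m hL hc₁ ⟨a, rfl⟩ hq (by linarith) (by linarith)
    (by
      have : (p:ℝ) * (Real.pi / (2 * p)) = Real.pi / 2 := by field_simp
      rw [this]; simp) hm hm' hmξ hξ (by positivity)
    (by nlinarith) hc
    (fun θ' h h' hh => by
      rw [← etau]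
      exact geo _ _ _ _ hL (by positivity) (by linarith) (by linarith) h h'
        (sin_lower p hp _ q2 (by linarith)) hh)
    (fun θ M g g' hM0 hM hMθ θ' h h' hh => by
      rw [← etau]
      have hN : (shifted q a L * mult p r).natDegree ≤ 4 * p * r := by
        refine natDegree_mul_le.trans ?_
        have := shifted_deg q a L
        have := mult_deg p r
        nlinarith
      have w1 := away (shifted q a L) p r (4 * p * r) hp hr le_rfl hN M hM0 hM 0
        (by intro w; simp) θ hMθ
      have w2 := away (shifted q a L) p r (4 * p * r) hp hr le_rfl hN M hM0 hM Real.pi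
        (by
          intro w
          rw [mul_add, add_comm, Complex.sin_antiperiodic.add_nat_mul_eq]
          simp) θ hMθ
      rw [sub_zero, abs_of_nonneg g] at w1
      rw [abs_of_nonpos (by linarith)] at w2
      exact geo _ _ _ _ hL (by positivity) g g' h h'
        (sin_lower p hp _ w1 (by linarith)) hh)
  have e : 3 * ((4 * p * r : ℕ):ℝ) * (256 * p / L) = 3072 * p * (p * r) / L := by
    push_cast; ring
  rwa [e, le_div_iff₀ hL] at key

lemma choose_p (k n : ℝ) (hk : 0 < k) (hkn : 2 * k ≤ n) :
    ∃ (p : ℕ) (L : ℝ), 0 < p ∧ L ≤ n ∧ n ≤ 16 * L ∧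
      k = L * (1 - Real.cos (Real.pi / (2 * p))) / 2 ∧ (p:ℝ) ^ 2 * k ≤ L ∧ 2 * k ≤ L := by
  have main : ∀ p : ℕ, 0 < p → k ≤ n * Real.sin (Real.pi / (4 * p)) ^ 2 →
      n ≤ 16 * k * (p:ℝ) ^ 2 → 
      ∃ (p : ℕ) (L : ℝ), 0 < p ∧ L ≤ n ∧ n ≤ 16 * L ∧
      k = L * (1 - Real.cos (Real.pi / (2 * p))) / 2 ∧ (p:ℝ) ^ 2 * k ≤ L ∧ 2 * k ≤ L := by
    intro p hp h1 h2
    have hp1 : (1:ℝ) ≤ p := by exact_mod_cast hp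
    have hpi := Real.pi_gt_three
    have hx0 : 0 < Real.pi / (4 * p) := by positivity
    have hx1 : Real.pi / (4 * p) ≤ Real.pi / 4 := by
      apply div_le_div_of_nonneg_left <;> linarith
    set s := Real.sin (Real.pi / (4 * p)) with hs
    have hs0 : 0 < s := Real.sin_pos_of_pos_of_lt_pi hx0 (by linarith)
    have hcos : 1 - Real.cos (Real.pi / (2 * p)) = 2 * s ^ 2 := by
      have : Real.pi / (2 * p) = 2 * (Real.pi / (4 * p)) := by field_simp; norm_num
      rw [this, Real.cos_two_mul, hs, Real.sin_sq]; ring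
    have hsp : s * p ≤ 1 := by
      have : s ≤ Real.pi / (4 * p) := Real.sin_le hx0.le
      calc s * p ≤ Real.pi / (4 * p) * p := by gcongr
        _ = Real.pi / 4 := by field_simp
        _ ≤ 1 := by linarith [Real.pi_le_four]
    have hsp2 : s ^ 2 * (p:ℝ) ^ 2 ≤ 1 := by
      rw [← mul_pow]; exact pow_le_one₀ (by positivity) hsp
    have hs2 : 2 * s ^ 2 ≤ 1 := by
      rw [← hcos]
      have : 0 ≤ Real.cos (Real.pi / (2 * p)) := by
        have : Real.pi / (2 * p) ≤ Real.pi / 2 := by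
          apply div_le_div_of_nonneg_left <;> linarith
        apply Real.cos_nonneg_of_neg_pi_div_two_le_of_le _ this
        have : 0 ≤ Real.pi / (2 * p) := by positivity
        linarith
      linarith
    have hpp : (p:ℝ) ^ 2 * k ≤ k / s ^ 2 := by
      rw [le_div_iff₀ (by positivity)]; nlinarith
    refine ⟨p, k / s ^ 2, hp, ?_, ?_, ?_, hpp, ?_⟩
    · rw [div_le_iff₀ (by positivity)]; exact h1
    · nlinarith
    · rw [hcos]; field_simp
    · rw [le_div_iff₀ (by positivity)]; nlinarith
  have hn : 0 < n := by linarith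
  set f := ⌊Real.sqrt (n / (4 * k))⌋₊ with hf
  have hlt : Real.sqrt (n / (4 * k)) < f + 1 := Nat.lt_floor_add_one _
  have hle : (f:ℝ) ≤ Real.sqrt (n / (4 * k)) := Nat.floor_le (Real.sqrt_nonneg _)
  have hlt2 : n < 4 * k * (f + 1) ^ 2 := by
    rw [Real.sqrt_lt' (by positivity), div_lt_iff₀ (by positivity)] at hlt
    linarith
  rcases Nat.eq_zero_or_pos f with h0 | h0
  · rw [h0] at hlt2
    norm_num at hlt2
    refine main 1 one_pos ?_ ?_
    · have : Real.sin (Real.pi / (4 * (1:ℕ))) ^ 2 = 1 / 2 := by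
        rw [Nat.cast_one, mul_one, Real.sin_pi_div_four, div_pow, Real.sq_sqrt (by norm_num)]; norm_num
      rw [this]; linarith
    · norm_num; linarith
  · have hf1 : (1:ℝ) ≤ f := by exact_mod_cast h0
    refine main f h0 ?_ ?_
    · have hpi := Real.pi_gt_three
      have hx0 : 0 ≤ Real.pi / (4 * f) := by positivity
      have hx1 : Real.pi / (4 * f) ≤ Real.pi / 2 := by
        apply div_le_div_of_nonneg_left <;> linarith
      have h5 := Real.mul_le_sin hx0 hx1
      have h6 : 2 / Real.pi * (Real.pi / (4 * f)) = 1 / (2 * f) := by field_simp; norm_num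
      rw [h6] at h5
      have h7 : (f:ℝ) ^ 2 * (4 * k) ≤ n := by
        have : (f:ℝ) ^ 2 ≤ n / (4 * k) := by
          rw [← Real.sq_sqrt (show 0 ≤ n / (4 * k) by positivity)]
          gcongr
        rwa [le_div_iff₀ (by positivity)] at this
      calc k ≤ n * (1 / (2 * f)) ^ 2 := by
            rw [div_pow, one_pow, mul_one_div, le_div_iff₀ (by positivity)]; linarith
        _ ≤ _ := by gcongr
    · have : ((f:ℝ) + 1) ^ 2 ≤ 4 * (f:ℝ) ^ 2 := by nlinarith
      nlinarith

lemma left_case (ε : ℝ) (hε : 0 < ε) : ∃ C > 0, ∀ (q : ℝ[X]) (a b : ℤ) (ξ c₁ c₂ : ℝ) (m : ℤ),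
    0 < c₁ → ε = min (1/2) (c₂ / (3 * c₁)) → a < b → (a:ℝ) ≤ ξ → ξ ≤ b →
    (∀ i : ℤ, a ≤ i → i ≤ b → |q.eval (i:ℝ)| ≤ c₁) →
    a ≤ m → m ≤ b → |(m:ℝ) - ξ| ≤ 1 → 0 < q.natDegree →
    c₂ ≤ |q.eval (m:ℝ) - q.eval ξ| → ξ - a ≤ b - ξ →
    C * Real.sqrt ((ξ - a + 1) * ((b:ℝ) - ξ + 1)) ≤ (q.natDegree : ℝ) := by
  set K := 6144 / ε + 1 with hK
  have hK0 : 0 < 6144 / ε := by positivity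
  have hsK : 0 < Real.sqrt (2 * (K + 1)) := Real.sqrt_pos.2 (by linarith)
  refine ⟨min (ε / (12 * Real.sqrt (2 * (K + 1)))) (ε / 24576), by positivity, ?_⟩
  intro q a b ξ c₁ c₂ m hc₁ hεd hab h1 h2 hq hm hm' hmξ hd hc hleft
  have hn1 : (1:ℝ) ≤ b - a := by
    have : (a:ℝ) + 1 ≤ b := by exact_mod_cast hab
    linarith
  have hS0 := Real.sqrt_nonneg ((ξ - a + 1) * ((b:ℝ) - ξ + 1))
  rcases le_total (ξ - a) K with hk | hk
  · have hA := caseA q a b ξ c₁ c₂ m hab hc₁ h1 h2 hq hm hm' hmξ hd hc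
    rw [← hεd] at hA
    have h3 : Real.sqrt ((ξ - a + 1) * ((b:ℝ) - ξ + 1)) ≤
        Real.sqrt (2 * (K + 1)) * Real.sqrt ((b:ℝ) - a) := by
      rw [← Real.sqrt_mul (by linarith)]
      apply Real.sqrt_le_sqrt
      have : (ξ - a + 1) * ((b:ℝ) - ξ + 1) ≤ (K + 1) * (2 * (b - a)) := by
        apply mul_le_mul <;> linarith
      linarith
    calc _ ≤ (ε / (12 * Real.sqrt (2 * (K + 1)))) * (Real.sqrt (2 * (K + 1)) * Real.sqrt ((b:ℝ) - a)) := by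
          gcongr
          exact min_le_left _ _
      _ = ε * Real.sqrt ((b:ℝ) - a) / 12 := by field_simp
      _ ≤ _ := by linarith
  · set k := ξ - a with hkdef
    have hk1 : 1 ≤ k := by linarith
    obtain ⟨p, L, hp, hLn, hnL, hkL, hpk, h2k⟩ := choose_p k (b - a) (by linarith) (by linarith)
    have hL : 0 < L := by linarith
    have hp0 : (0:ℝ) < p := by exact_mod_cast hp
    set d := q.natDegree with hdd
    set r := d / (2 * p) + 1 with hr
    have hr1 : d ≤ 2 * p * r := by
      have := Nat.lt_mul_div_succ d (show 0 < 2 * p by positivity)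
      exact this.le
    have hr2 : 2 * p * r ≤ d + 2 * p := by
      have := Nat.mul_div_le d (2 * p)
      rw [hr, mul_add]; omega
    have hr2' : 2 * (p:ℝ) * r ≤ d + 2 * p := by exact_mod_cast hr2
    rw [abs_le] at hmξ
    have hB := caseB q a L ξ c₁ c₂ p r m hL hc₁ hp (Nat.succ_pos _) hr1
      (fun i hi hi' => hq i (by exact_mod_cast hi) (by
        have : (i:ℝ) ≤ b := by linarith
        exact_mod_cast this)) (by exact_mod_cast hm) (by linarith) (abs_le.2 hmξ)
      (by linarith) hc
    rw [← hεd] at hB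
    have h3 : 3072 * (p:ℝ) * (p * r) ≤ 1536 * p * d + 3072 * (p:ℝ) ^ 2 := by nlinarith
    have h4 : 3072 * (p:ℝ) ^ 2 ≤ ε * L / 2 := by
      have : 6144 ≤ ε * k := by
        have h5 : 6144 / ε ≤ k := by linarith
        rw [div_le_iff₀ hε] at h5; linarith
      have h6 : (p:ℝ) ^ 2 * 6144 ≤ (p:ℝ) ^ 2 * (ε * k) := by gcongr
      have h7 : ε * ((p:ℝ) ^ 2 * k) ≤ ε * L := by gcongr
      linarith
    have h5 : ε * L ≤ 3072 * p * d := by linarith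
    have h6 : (ε * L) ^ 2 ≤ (3072 * p * d) ^ 2 := by gcongr
    have h7 : ε ^ 2 * (L * k) ≤ (3072 * d) ^ 2 := by
      have e1 : ε ^ 2 * L ^ 2 * k ≤ (3072 * (d:ℝ)) ^ 2 * L := by
        calc ε ^ 2 * L ^ 2 * k = (ε * L) ^ 2 * k := by ring
          _ ≤ (3072 * p * d) ^ 2 * k := by gcongr
          _ = (3072 * (d:ℝ)) ^ 2 * ((p:ℝ) ^ 2 * k) := by ring
          _ ≤ _ := by gcongr
      refine le_of_mul_le_mul_right ?_ hL
      calc _ = ε ^ 2 * L ^ 2 * k := by ring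
        _ ≤ _ := e1
    have h8 : (k + 1) * ((b:ℝ) - ξ + 1) ≤ 64 * (L * k) := by
      calc (k + 1) * ((b:ℝ) - ξ + 1) ≤ (2 * k) * (2 * (16 * L)) := by
            apply mul_le_mul <;> linarith
        _ = _ := by ring
    have h9 : ε * Real.sqrt ((k + 1) * ((b:ℝ) - ξ + 1)) ≤ 24576 * d := by
      refine le_of_sq_le_sq ?_ (by positivity)
      rw [mul_pow, Real.sq_sqrt (by apply mul_nonneg <;> linarith)]
      calc _ ≤ ε ^ 2 * (64 * (L * k)) := by gcongr
        _ ≤ _ := by nlinarith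
    calc _ ≤ ε / 24576 * Real.sqrt ((k + 1) * ((b:ℝ) - ξ + 1)) := by
          gcongr
          exact min_le_right _ _
      _ ≤ _ := by linarith

/-- (Paturi) If `|q(i)| ≤ c₁` on all integers of `[a,b]` and
`|q(⌊ξ⌋) - q(ξ)| ≥ c₂` for some real `ξ ∈ [a,b]`, then
`deg q ≥ C √((ξ-a+1)(b-ξ+1))` for a constant `C > 0` depending only on
`c₁, c₂`. -/
theorem stmt_12 (c₁ c₂ : ℝ) (hc₁ : 0 < c₁) (hc₂ : 0 < c₂) :
    ∃ C > 0, ∀ (q : Polynomial ℝ) (a b : ℤ) (ξ : ℝ), a < b →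
      (a : ℝ) ≤ ξ → ξ ≤ (b : ℝ) →
      (∀ i : ℤ, a ≤ i → i ≤ b → |q.eval (i : ℝ)| ≤ c₁) →
      c₂ ≤ |q.eval ((⌊ξ⌋ : ℤ) : ℝ) - q.eval ξ| →
      C * Real.sqrt ((ξ - a + 1) * ((b : ℝ) - ξ + 1)) ≤ (q.natDegree : ℝ) := by
  obtain ⟨C, hC, H⟩ := left_case (min (1/2) (c₂ / (3 * c₁))) (by positivity)
  refine ⟨C, hC, ?_⟩
  intro q a b ξ hab h1 h2 hq hc
  have hd : 0 < q.natDegree := by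
    by_contra! h
    have h0 : q.natDegree = 0 := by omega
    rw [Polynomial.eq_C_of_natDegree_eq_zero h0] at hc
    simp at hc
    linarith
  have hm : a ≤ ⌊ξ⌋ := Int.le_floor.2 h1
  have hm' : ⌊ξ⌋ ≤ b := by
    have : ((⌊ξ⌋ : ℤ) : ℝ) ≤ b := (Int.floor_le ξ).trans h2
    exact_mod_cast this
  have hf1 := Int.floor_le ξ
  have hf2 := Int.lt_floor_add_one ξ
  rcases le_total (ξ - a) (b - ξ) with h | h
  · exact H q a b ξ c₁ c₂ ⌊ξ⌋ hc₁ rfl hab h1 h2 hq hm hm'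
      (abs_le.2 ⟨by linarith, by linarith⟩) hd hc h
  · have hev : ∀ x : ℝ, (q.comp (-X)).eval x = q.eval (-x) := by intro x; simp [eval_comp]
    have hdeg : (q.comp (-X)).natDegree = q.natDegree := by
      rw [natDegree_comp, natDegree_neg, natDegree_X, mul_one]
    have := H (q.comp (-X)) (-b) (-a) (-ξ) c₁ c₂ (-⌊ξ⌋) hc₁ rfl (by omega)
      (by push_cast; linarith) (by push_cast; linarith)
      (by
        intro i hi hi'
        rw [hev]
        have := hq (-i) (by omega) (by omega)
        push_cast at this
        exact this)
      (by omega) (by omega)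
      (abs_le.2 ⟨by push_cast; linarith, by push_cast; linarith⟩)
      (by rw [hdeg]; exact hd)
      (by rw [hev, hev]; push_cast; simpa using hc)
      (by push_cast; linarith)
    rw [hdeg] at this
    have e : (-ξ - ((-b : ℤ):ℝ) + 1) * (((-a : ℤ):ℝ) - -ξ + 1) = (ξ - a + 1) * ((b : ℝ) - ξ + 1) := by
      push_cast; ring
    rwa [e] at this
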